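/- Let C ⊆ F_{q^m}^n be an F_{q^m}-linear code of dimension k with 0 < k < n, and let 1 ≤ r ≤ k. The following conditions are equivalent: (1) C is r-MRD, i.e., d_{R,r}(C) = n − k + r; (2) d_{R,1}(C^⊥) ≥ k − r + 2; (3) for every F_q-subspace L ⊆ F_q^n with dim_{F_q} L ≤ k − r + 1, one has dim_{F_{q^m}}(C^L) = dim_{F_q} L; (4) for every F_q-subspace L ⊆ F_q^n with dim_{F_q} L ≥ n − k + r − 1, one has dim_{F_{q^m}}((C^⊥)^L) = n − k. -/

import Mathlib

open Submodule Module

namespace RankPaper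

variable {n : ℕ}

/-- The coordinatewise `q^i`-th power map on `Fqm^n`. -/
def qpowMap (q i : ℕ) {Fqm : Type} [Field Fqm] (v : Fin n → Fqm) : Fin n → Fqm :=
  fun j => v j ^ q ^ i

/-- The Galois closure `D* = Σ_{i=0}^{m-1} D^{q^i}` of a subspace (as the span of the
union of the images of `D` under the coordinatewise `q^i`-power maps, `0 ≤ i < m`). -/
def galClosure (q m : ℕ) {Fqm : Type} [Field Fqm] (D : Submodule Fqm (Fin n → Fqm)) :
    Submodule Fqm (Fin n → Fqm) :=
  Submodule.span Fqm (⋃ i ∈ Finset.range m, qpowMap q i '' (D : Set (Fin n → Fqm)))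

/-- `D` is Galois closed if `D = D*`. -/
def GaloisClosed (q m : ℕ) {Fqm : Type} [Field Fqm] (D : Submodule Fqm (Fin n → Fqm)) : Prop :=
  galClosure q m D = D

/-- Rank weight of a subspace: `wt_R(D) = dim_{Fqm} D*`. -/
noncomputable def wtR (q m : ℕ) {Fqm : Type} [Field Fqm]
    (D : Submodule Fqm (Fin n → Fqm)) : ℕ :=
  finrank Fqm (galClosure q m D)

/-- Rank weight of a vector: `wt_R(c) = wt_R(span {c})`. -/
noncomputable def wtRv (q m : ℕ) {Fqm : Type} [Field Fqm] (c : Fin n → Fqm) : ℕ :=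
  wtR q m (Submodule.span Fqm ({c} : Set (Fin n → Fqm)))

/-- Hamming weight of a subspace: the number of coordinates where some element is nonzero. -/
noncomputable def wtH {Fqm : Type} [Field Fqm] (D : Submodule Fqm (Fin n → Fqm)) : ℕ :=
  {i : Fin n | ∃ d ∈ D, d i ≠ 0}.ncard

/-- `r`-th generalized rank weight of a linear code. -/
noncomputable def dR (q m : ℕ) {Fqm : Type} [Field Fqm]
    (C : Submodule Fqm (Fin n → Fqm)) (r : ℕ) : ℕ :=
  sInf { dv | ∃ V : Submodule Fqm (Fin n → Fqm),
    GaloisClosed q m V ∧ r ≤ finrank Fqm ↥(C ⊓ V) ∧ dv = finrank Fqm ↥V }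

/-- `r`-th generalized Hamming weight of a linear code. -/
noncomputable def dH {Fqm : Type} [Field Fqm]
    (C : Submodule Fqm (Fin n → Fqm)) (r : ℕ) : ℕ :=
  sInf { w | ∃ D : Submodule Fqm (Fin n → Fqm), D ≤ C ∧ finrank Fqm ↥D = r ∧ w = wtH D }

/-- `r`-th relative generalized rank weight of a nested code pair. -/
noncomputable def MR (q m : ℕ) {Fqm : Type} [Field Fqm]
    (C₁ C₂ : Submodule Fqm (Fin n → Fqm)) (r : ℕ) : ℕ :=
  sInf { dv | ∃ V : Submodule Fqm (Fin n → Fqm), GaloisClosed q m V ∧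
    r ≤ finrank Fqm ↥(C₁ ⊓ V) - finrank Fqm ↥(C₂ ⊓ V) ∧ dv = finrank Fqm ↥V }

/-- Minimum rank distance of an arbitrary (possibly nonlinear) code. -/
noncomputable def dRset (q m : ℕ) {Fqm : Type} [Field Fqm] (C : Set (Fin n → Fqm)) : ℕ :=
  sInf { w | ∃ c₁ ∈ C, ∃ c₂ ∈ C, c₁ ≠ c₂ ∧ w = wtRv q m (c₁ - c₂) }

/-- The linear functional `x ↦ Σ_j x_j y_j` (dot product with `y`). -/
def dotLin {K : Type} [Field K] (y : Fin n → K) : (Fin n → K) →ₗ[K] K :=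
  ∑ j, y j • LinearMap.proj j

/-- Orthogonal complement of a subspace with respect to the standard bilinear form. -/
def perp {K : Type} [Field K] (L : Submodule K (Fin n → K)) : Submodule K (Fin n → K) :=
  ⨅ y ∈ L, LinearMap.ker (dotLin y)

/-- The coordinatewise inclusion `Fq^n → Fqm^n`. -/
def embFq (Fq Fqm : Type) [Field Fq] [Field Fqm] [Algebra Fq Fqm] :
    (Fin n → Fq) →ₗ[Fq] (Fin n → Fqm) :=
  LinearMap.pi fun j => (Algebra.linearMap Fq Fqm).comp (LinearMap.proj j)

/-- `V_L = L ⊗ Fqm`, the `Fqm`-span of `L ⊆ Fq^n` inside `Fqm^n`. -/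
def VL {Fq : Type} (Fqm : Type) [Field Fq] [Field Fqm] [Algebra Fq Fqm]
    (L : Submodule Fq (Fin n → Fq)) : Submodule Fqm (Fin n → Fqm) :=
  Submodule.span Fqm (embFq Fq Fqm '' (L : Set (Fin n → Fq)))

/-- Rank-punctured code `C^L`: the image of `C` in `Fqm^n / V_{L^⊥}`. -/
noncomputable def punct {Fq Fqm : Type} [Field Fq] [Field Fqm] [Algebra Fq Fqm]
    (L : Submodule Fq (Fin n → Fq)) (C : Submodule Fqm (Fin n → Fqm)) :
    Submodule Fqm ((Fin n → Fqm) ⧸ VL Fqm (perp L)) :=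
  Submodule.map (VL Fqm (perp L)).mkQ C


lemma dotLin_apply {K : Type} [Field K] (y x : Fin n → K) : dotLin y x = y ⬝ᵥ x := by
  simp [dotLin, dotProduct]

lemma mem_perp {K : Type} [Field K] (L : Submodule K (Fin n → K)) (x : Fin n → K) :
    x ∈ perp L ↔ ∀ y ∈ L, y ⬝ᵥ x = 0 := by
  simp [perp, dotLin_apply]

lemma perp_sup {K : Type} [Field K] (A B : Submodule K (Fin n → K)) :
    perp (A ⊔ B) = perp A ⊓ perp B := by
  ext x
  rw [Submodule.mem_inf, mem_perp, mem_perp, mem_perp]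
  constructor
  · intro h
    exact ⟨fun y hy => h y (Submodule.mem_sup_left hy),
      fun y hy => h y (Submodule.mem_sup_right hy)⟩
  · rintro ⟨h1, h2⟩ y hy
    obtain ⟨a, ha, b, hb, rfl⟩ := Submodule.mem_sup.1 hy
    rw [add_dotProduct, h1 a ha, h2 b hb, add_zero]

lemma finrank_perp {K : Type} [Field K] (L : Submodule K (Fin n → K)) :
    finrank K L + finrank K (perp L) = n := by
  have h : perp L = LinearMap.BilinForm.orthogonal (dotProductBilin K K) L := by
    ext x
    rw [mem_perp, LinearMap.BilinForm.mem_orthogonal_iff]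
    rfl
  have h2 := LinearMap.BilinForm.finrank_add_finrank_orthogonal'
    (B := (dotProductBilin K K : LinearMap.BilinForm K (Fin n → K))) L
  have h3 : LinearMap.ker (dotProductBilin K K : LinearMap.BilinForm K (Fin n → K)) = ⊥ := by
    rw [LinearMap.ker_eq_bot']
    intro v hv
    apply dotProduct_eq_zero
    intro w
    exact LinearMap.congr_fun hv w
  rw [h3, inf_bot_eq, finrank_bot, ← h] at h2
  simpa using h2

lemma perp_perp {K : Type} [Field K] (L : Submodule K (Fin n → K)) :
    perp (perp L) = L := by
  symm
  apply Submodule.eq_of_le_of_finrank_le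
  · intro x hx
    rw [mem_perp]
    intro y hy
    rw [dotProduct_comm]
    exact (mem_perp _ _).1 hy x hx
  · have h1 := finrank_perp L
    have h2 := finrank_perp (perp L)
    omega

/-- Dimension formula for intersections and duals. -/
lemma finrank_inf_formula {K : Type} [Field K] (A B : Submodule K (Fin n → K)) :
    finrank K ↥(A ⊓ B) + n = finrank K A + finrank K B + finrank K ↥(perp A ⊓ perp B) := by
  have h1 := Submodule.finrank_sup_add_finrank_inf_eq A B
  have h2 := finrank_perp (A ⊔ B)
  rw [perp_sup] at h2
  omega

lemma exists_ge_finrank {K : Type} [Field K] (L : Submodule K (Fin n → K)) (d : ℕ)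
    (h1 : finrank K L ≤ d) (h2 : d ≤ n) : ∃ L', L ≤ L' ∧ finrank K L' = d := by
  induction d, h1 using Nat.le_induction with
  | base => exact ⟨L, le_rfl, rfl⟩
  | succ d hd ih =>
    obtain ⟨L', hL, hf⟩ := ih (by omega)
    have hlt : L' < ⊤ := by
      apply lt_top_iff_ne_top.2
      rintro rfl
      rw [finrank_top] at hf
      simp at hf
      omega
    obtain ⟨v, -, hv⟩ := SetLike.exists_of_lt hlt
    exact ⟨L' ⊔ Submodule.span K {v}, hL.trans le_sup_left, by
      rw [Submodule.finrank_sup_span_singleton hv, hf]⟩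

section VLlemmas

variable {Fq Fqm : Type} [Field Fq] [Field Fqm] [Algebra Fq Fqm]

lemma VL_mono {L L' : Submodule Fq (Fin n → Fq)} (h : L ≤ L') : VL Fqm L ≤ VL Fqm L' :=
  Submodule.span_mono (Set.image_mono h)

lemma finrank_VL_le (L : Submodule Fq (Fin n → Fq)) :
    finrank Fqm (VL Fqm L) ≤ finrank Fq L := by
  let b := Module.finBasis Fq L
  have hle : VL Fqm L ≤ Submodule.span Fqm (Set.range fun i => embFq Fq Fqm (b i : Fin n → Fq)) := by
    apply Submodule.span_le.2
    rintro _ ⟨x, hx, rfl⟩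
    have hx2 : x = ∑ i, b.repr ⟨x, hx⟩ i • (b i : Fin n → Fq) := by
      have := congrArg (Submodule.subtype L) (b.sum_repr ⟨x, hx⟩)
      rw [map_sum] at this
      exact this.symm
    rw [hx2, map_sum]
    apply Submodule.sum_mem
    intro i _
    rw [map_smul, ← algebraMap_smul Fqm]
    exact Submodule.smul_mem _ _ (Submodule.subset_span ⟨i, rfl⟩)
  refine (Submodule.finrank_mono hle).trans ?_
  refine (finrank_range_le_card _).trans ?_
  simp

lemma finrank_VL (L : Submodule Fq (Fin n → Fq)) :
    finrank Fqm (VL Fqm L) = finrank Fq L := by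
  obtain ⟨L', hL'⟩ := Submodule.exists_isCompl L
  have h1 := finrank_VL_le (Fqm := Fqm) L
  have h2 := finrank_VL_le (Fqm := Fqm) L'
  have h3 := Submodule.finrank_add_eq_of_isCompl hL'
  have h4 : VL Fqm L ⊔ VL Fqm L' = ⊤ := by
    rw [eq_top_iff]
    intro x _
    rw [pi_eq_sum_univ x]
    apply Submodule.sum_mem
    intro i _
    apply Submodule.smul_mem
    have hi : (Pi.single i 1 : Fin n → Fq) ∈ L ⊔ L' := by rw [hL'.sup_eq_top]; trivial
    obtain ⟨a, ha, b, hb, hab⟩ := Submodule.mem_sup.1 hi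
    have he : (fun j => if i = j then (1 : Fqm) else 0) = embFq Fq Fqm a + embFq Fq Fqm b := by
      rw [← map_add, hab]
      ext j
      by_cases hij : i = j
      · subst hij; simp [embFq]
      · simp [embFq, hij, Ne.symm hij]
    rw [he]
    exact Submodule.add_mem_sup (Submodule.subset_span ⟨a, ha, rfl⟩)
      (Submodule.subset_span ⟨b, hb, rfl⟩)
  have h5 := Submodule.finrank_add_le_finrank_add_finrank (VL Fqm L) (VL Fqm L')
  rw [h4, finrank_top] at h5
  simp at h5 h3
  omega

lemma perp_VL (L : Submodule Fq (Fin n → Fq)) : perp (VL Fqm L) = VL Fqm (perp L) := by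
  symm
  apply Submodule.eq_of_le_of_finrank_le
  · apply Submodule.span_le.2
    rintro _ ⟨x, hx, rfl⟩
    rw [SetLike.mem_coe, mem_perp]
    intro y hy
    induction hy using Submodule.span_induction with
    | mem y hy =>
      obtain ⟨z, hz, rfl⟩ := hy
      have := congrArg (algebraMap Fq Fqm) ((mem_perp _ _).1 hx z hz)
      simpa [dotProduct, embFq] using this
    | zero => simp
    | add a b _ _ ha hb => rw [add_dotProduct, ha, hb, add_zero]
    | smul c a _ ha => rw [smul_dotProduct, ha, smul_zero]
  · have h1 := finrank_perp L
    have h2 := finrank_perp (VL Fqm L)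
    rw [finrank_VL] at h2 ⊢
    omega

lemma finrank_punct (L : Submodule Fq (Fin n → Fq)) (C : Submodule Fqm (Fin n → Fqm)) :
    finrank Fqm (punct L C) + finrank Fqm ↥(C ⊓ VL Fqm (perp L)) = finrank Fqm C := by
  have h := LinearMap.finrank_range_add_finrank_ker ((VL Fqm (perp L)).mkQ.domRestrict C)
  have h1 : LinearMap.range ((VL Fqm (perp L)).mkQ.domRestrict C) = punct L C := by
    rw [LinearMap.range_domRestrict]; rfl
  have h2 : finrank Fqm (LinearMap.ker ((VL Fqm (perp L)).mkQ.domRestrict C)) =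
      finrank Fqm ↥(C ⊓ VL Fqm (perp L)) := by
    rw [LinearMap.ker_domRestrict, Submodule.ker_mkQ, ← Submodule.finrank_map_subtype_eq,
      Submodule.map_comap_subtype]
  rw [h1, h2] at h
  exact h

lemma galoisClosed_VL [Finite Fqm] (L : Submodule Fq (Fin n → Fq)) :
    GaloisClosed (Nat.card Fq) (finrank Fq Fqm) (VL Fqm L) := by
  have : Finite Fq := Finite.of_injective _ (FaithfulSMul.algebraMap_injective Fq Fqm)
  have := Fintype.ofFinite Fq
  apply le_antisymm
  · apply Submodule.span_le.2
    intro v hv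
    simp only [Set.mem_iUnion] at hv
    obtain ⟨i, -, x, hx, rfl⟩ := hv
    rw [SetLike.mem_coe] at hx ⊢
    have key : ∀ y : Fqm, y ^ Nat.card Fq ^ i = (FiniteField.frobeniusAlgHom Fq Fqm ^ i) y := by
      intro y
      induction i with
      | zero => simp
      | succ i ih =>
        rw [pow_succ' (FiniteField.frobeniusAlgHom Fq Fqm), AlgHom.mul_apply, ← ih,
          FiniteField.coe_frobeniusAlgHom, ← Nat.card_eq_fintype_card]
        simp only [← pow_mul, pow_succ]
    have hq : ∀ x : Fin n → Fqm, qpowMap (Nat.card Fq) i x =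
        fun j => (FiniteField.frobeniusAlgHom Fq Fqm ^ i) (x j) := by
      intro x; ext j; exact key _
    rw [hq]
    induction hx using Submodule.span_induction with
    | mem y hy =>
      obtain ⟨z, hz, rfl⟩ := hy
      apply Submodule.subset_span
      refine ⟨z, hz, ?_⟩
      ext j
      simp [embFq]
    | zero => simp only [Pi.zero_apply, map_zero]; exact Submodule.zero_mem _
    | add a b _ _ ha hb =>
      have := Submodule.add_mem _ ha hb
      convert this using 1
      ext j
      simp
    | smul c a _ ha =>
      have := Submodule.smul_mem _ ((FiniteField.frobeniusAlgHom Fq Fqm ^ i) c) ha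
      convert this using 1
      ext j
      simp
  · intro x hx
    apply Submodule.subset_span
    simp only [Set.mem_iUnion]
    refine ⟨0, Finset.mem_range.2 Module.finrank_pos, x, hx, ?_⟩
    ext j
    simp [qpowMap]

lemma exists_VL_of_galoisClosed [Finite Fqm] (V : Submodule Fqm (Fin n → Fqm))
    (hV : GaloisClosed (Nat.card Fq) (finrank Fq Fqm) V) :
    ∃ L : Submodule Fq (Fin n → Fq), V = VL Fqm L := by
  have : Finite Fq := Finite.of_injective _ (FaithfulSMul.algebraMap_injective Fq Fqm)
  refine ⟨(V.restrictScalars Fq).comap (embFq Fq Fqm), le_antisymm ?_ ?_⟩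
  · intro v hv
    let b := Module.finBasis Fq Fqm
    have h1 : v = ∑ i, b.traceDual i •
        embFq Fq Fqm (fun j => Algebra.trace Fq Fqm (v j * b i)) := by
      ext j
      have := b.traceDual.sum_repr (v j)
      simp only [Basis.traceDual_repr_apply, Algebra.traceForm_apply] at this
      conv_lhs => rw [← this]
      simp [embFq, Algebra.smul_def, mul_comm]
    rw [h1]
    apply Submodule.sum_mem
    intro i _
    apply Submodule.smul_mem
    apply Submodule.subset_span
    refine ⟨_, ?_, rfl⟩
    change embFq Fq Fqm _ ∈ V
    have h2 : embFq Fq Fqm (fun j => Algebra.trace Fq Fqm (v j * b i)) =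
        ∑ t ∈ Finset.range (finrank Fq Fqm), qpowMap (Nat.card Fq) t (b i • v) := by
      ext j
      simp [embFq, qpowMap, FiniteField.algebraMap_trace_eq_sum_pow, mul_comm]
    rw [h2]
    apply Submodule.sum_mem
    intro t ht
    have h3 : qpowMap (Nat.card Fq) t (b i • v) ∈
        galClosure (Nat.card Fq) (finrank Fq Fqm) V := by
      apply Submodule.subset_span
      simp only [Set.mem_iUnion]
      exact ⟨t, ht, _, V.smul_mem _ hv, rfl⟩
    rwa [hV] at h3
  · apply Submodule.span_le.2
    rintro _ ⟨x, hx, rfl⟩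
    exact hx

lemma dR_nonempty [Finite Fqm] (C : Submodule Fqm (Fin n → Fqm)) (r : ℕ)
    (hr : r ≤ finrank Fqm C) :
    ∃ L : Submodule Fq (Fin n → Fq), r ≤ finrank Fqm ↥(C ⊓ VL Fqm L) ∧
      dR (Nat.card Fq) (finrank Fq Fqm) C r = finrank Fq L := by
  have hne : { dv | ∃ V : Submodule Fqm (Fin n → Fqm),
      GaloisClosed (Nat.card Fq) (finrank Fq Fqm) V ∧ r ≤ finrank Fqm ↥(C ⊓ V) ∧
      dv = finrank Fqm ↥V }.Nonempty := by
    refine ⟨_, VL Fqm (⊤ : Submodule Fq (Fin n → Fq)), galoisClosed_VL _, ?_, rfl⟩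
    have h : VL Fqm (⊤ : Submodule Fq (Fin n → Fq)) = ⊤ := by
      apply Submodule.eq_top_of_finrank_eq
      rw [finrank_VL]
      simp
    rwa [h, inf_top_eq]
  obtain ⟨V, hV, h1, h2⟩ := Nat.sInf_mem hne
  obtain ⟨L, rfl⟩ := exists_VL_of_galoisClosed V hV
  exact ⟨L, h1, by rw [dR, h2, finrank_VL]⟩

lemma dR_le [Finite Fqm] (C : Submodule Fqm (Fin n → Fqm)) (r : ℕ)
    (L : Submodule Fq (Fin n → Fq)) (h : r ≤ finrank Fqm ↥(C ⊓ VL Fqm L)) :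
    dR (Nat.card Fq) (finrank Fq Fqm) C r ≤ finrank Fq L :=
  Nat.sInf_le ⟨_, galoisClosed_VL L, h, (finrank_VL L).symm⟩

lemma finrank_inf_VL (C : Submodule Fqm (Fin n → Fqm)) (L : Submodule Fq (Fin n → Fq)) :
    finrank Fqm ↥(C ⊓ VL Fqm L) + n =
      finrank Fqm C + finrank Fq L + finrank Fqm ↥(perp C ⊓ VL Fqm (perp L)) := by
  rw [finrank_inf_formula, perp_VL, finrank_VL]

end VLlemmas

/-- characterizations of `r`-MRD codes via the dual minimum rank
distance and dimensions of rank-punctured codes. -/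
theorem stmt15 (q m n k r : ℕ) (Fq Fqm : Type) [Field Fq] [Field Fqm] [Algebra Fq Fqm]
    [Finite Fqm] (hq : Nat.card Fq = q) (hm : finrank Fq Fqm = m)
    (C : Submodule Fqm (Fin n → Fqm)) (hk : finrank Fqm C = k)
    (hk0 : 0 < k) (hkn : k < n) (hr1 : 1 ≤ r) (hrk : r ≤ k) :
    [ -- (1) C is r-MRD
      dR q m C r = n - k + r,
      -- (2) the dual has minimum rank distance at least k - r + 2
      k - r + 2 ≤ dR q m (perp C) 1,
      -- (3) puncturing on small spaces preserves the dimension of L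
      (∀ L : Submodule Fq (Fin n → Fq), finrank Fq L ≤ k - r + 1 →
        finrank Fqm (punct L C) = finrank Fq L),
      -- (4) puncturing the dual on large spaces gives full dimension n - k
      (∀ L : Submodule Fq (Fin n → Fq), n - k + r - 1 ≤ finrank Fq L →
        finrank Fqm (punct L (perp C)) = n - k) ].TFAE := by
  subst hq hm
  have hC := finrank_perp C
  -- the common reformulation of all four conditions
  let P : Prop := ∀ L : Submodule Fq (Fin n → Fq), finrank Fq L ≤ k - r + 1 →
    finrank Fqm ↥(perp C ⊓ VL Fqm L) = 0
  have e1 : dR (Nat.card Fq) (finrank Fq Fqm) C r = n - k + r ↔ P := by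
    constructor
    · intro h L hL
      obtain ⟨L', hLL, hL'⟩ := exists_ge_finrank L (k - r + 1) hL (by omega)
      have hm := Submodule.finrank_mono (inf_le_inf_left (perp C) (VL_mono (Fqm := Fqm) hLL))
      have f1 := finrank_perp L'
      have f2 := finrank_inf_VL C (perp L')
      rw [perp_perp] at f2
      by_contra hne
      have := dR_le C r (perp L') (by omega)
      omega
    · intro h
      apply le_antisymm
      · obtain ⟨L, -, hL⟩ := exists_ge_finrank (⊥ : Submodule Fq (Fin n → Fq)) (n - k + r)
          (by simp) (by omega)
        have f2 := finrank_inf_VL C L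
        have := dR_le C r L (by omega)
        omega
      · obtain ⟨L, h1, h2⟩ := dR_nonempty (Fq := Fq) C r (by omega)
        by_contra hlt
        obtain ⟨L', hLL, hL'⟩ := exists_ge_finrank L (n - k + r - 1) (by omega) (by omega)
        have hm := Submodule.finrank_mono (inf_le_inf_left C (VL_mono (Fqm := Fqm) hLL))
        have f1 := finrank_perp L'
        have f2 := finrank_inf_VL C L'
        have f3 := h (perp L') (by omega)
        omega
  have e2 : k - r + 2 ≤ dR (Nat.card Fq) (finrank Fq Fqm) (perp C) 1 ↔ P := by
    constructor
    · intro h L hL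
      by_contra hne
      have := dR_le (perp C) 1 L (by omega)
      omega
    · intro h
      obtain ⟨L, h1, h2⟩ := dR_nonempty (Fq := Fq) (perp C) 1 (by omega)
      by_contra hlt
      have := h L (by omega)
      omega
  have e3 : (∀ L : Submodule Fq (Fin n → Fq), finrank Fq L ≤ k - r + 1 →
      finrank Fqm (punct L C) = finrank Fq L) ↔ P := by
    refine forall_congr' fun L => forall_congr' fun hL => ?_
    have f1 := finrank_punct L C
    have f2 := finrank_inf_VL C (perp L)
    have f3 := finrank_perp L
    rw [perp_perp] at f2
    omega
  have e4 : (∀ L : Submodule Fq (Fin n → Fq), n - k + r - 1 ≤ finrank Fq L →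
      finrank Fqm (punct L (perp C)) = n - k) ↔ P := by
    constructor
    · intro h L hL
      have f3 := finrank_perp L
      have f1 := finrank_punct (perp L) (perp C)
      have := h (perp L) (by omega)
      have f4 : finrank Fqm ↥(perp C ⊓ VL Fqm (perp (perp L))) =
          finrank Fqm ↥(perp C ⊓ VL Fqm L) := by rw [perp_perp]
      omega
    · intro h L hL
      have f3 := finrank_perp L
      have f1 := finrank_punct L (perp C)
      have := h (perp L) (by omega)
      omega
  tfae_have 1 ↔ 2 := e1.trans e2.symm
  tfae_have 2 ↔ 3 := e2.trans e3.symm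
  tfae_have 3 ↔ 4 := e3.trans e4.symm
  tfae_finish

end RankPaper
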